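/- The greedy algorithm for maximizing a monotone nondecreasing submodular set function f with f(∅) = 0 subject to a cardinality constraint |S| = k achieves f(S_greedy) ≥ (1 − 1/e)·f(S*), where S* is an optimal size-k set; specifically f(S_k) ≥ (1 − (1−1/k)^k)·f(S*) ≥ (1 − 1/e)·f(S*). -/

import Mathlib

/-- If every element outside `A` has marginal gain at most `c` over `A`, then adding a set `T` to
`A` increases a submodular function by at most `#T * c`. -/
lemma submodular_union_le_add_card_mul {V : Type*} [DecidableEq V] {f : Finset V → ℝ}
    (hsub : ∀ (A B : Finset V) (u : V), A ⊆ B → u ∉ B →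
      f (insert u B) - f B ≤ f (insert u A) - f A)
    {A : Finset V} {c : ℝ} (hc : 0 ≤ c) (hgain : ∀ w, w ∉ A → f (insert w A) - f A ≤ c)
    (T : Finset V) : f (A ∪ T) ≤ f A + T.card * c := by
  induction T using Finset.induction_on with
  | empty => simp
  | insert a T ha ih =>
    rw [Finset.union_insert, Finset.card_insert_of_notMem ha]
    push_cast
    by_cases hmem : a ∈ A ∪ T
    · rw [Finset.insert_eq_of_mem hmem]
      linarith
    · have hmarg := hsub A (A ∪ T) a Finset.subset_union_left hmem
      have hbound := hgain a fun h => hmem (Finset.mem_union_left T h)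
      linarith

/-- A sequence whose increments are at least `1 / k` of the distance to `M` approaches `M`
geometrically. -/
lemma sub_le_one_sub_inv_pow_mul {a : ℕ → ℝ} {M : ℝ} {k : ℕ} (hk : 1 ≤ k)
    (hstep : ∀ i < k, M ≤ a i + k * (a (i + 1) - a i)) {i : ℕ} (hi : i ≤ k) :
    M - a i ≤ (1 - 1 / (k : ℝ)) ^ i * (M - a 0) := by
  have hkpos : (0 : ℝ) < k := by exact_mod_cast hk
  have hratio : 0 ≤ 1 - 1 / (k : ℝ) := by
    rw [sub_nonneg, div_le_one hkpos]
    exact_mod_cast hk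
  induction i with
  | zero => simp
  | succ i ih =>
    have hdiv : (M - a i) / k ≤ a (i + 1) - a i := by
      rw [div_le_iff₀ hkpos]
      linarith [hstep i hi]
    calc M - a (i + 1) ≤ (1 - 1 / (k : ℝ)) * (M - a i) := by
          rw [sub_mul, one_mul, one_div_mul_eq_div]
          linarith
      _ ≤ (1 - 1 / (k : ℝ)) * ((1 - 1 / (k : ℝ)) ^ i * (M - a 0)) :=
          mul_le_mul_of_nonneg_left (ih (by omega)) hratio
      _ = (1 - 1 / (k : ℝ)) ^ (i + 1) * (M - a 0) := by ring


/-- Greedy maximization of a monotone nondecreasing submodular function `f` with `f(∅)=0`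
under a cardinality constraint: `f(S_k) ≥ (1 − (1−1/k)^k)·f(S*) ≥ (1 − 1/e)·f(S*)`. -/
theorem stmt10 {V : Type*} [DecidableEq V] [Fintype V] (f : Finset V → ℝ)
    (hnonneg : ∀ A, 0 ≤ f A)
    (hmono : ∀ A B : Finset V, A ⊆ B → f A ≤ f B)
    (hsub : ∀ (A B : Finset V) (u : V), A ⊆ B → u ∉ B →
      f (insert u B) - f B ≤ f (insert u A) - f A)
    (hempty : f ∅ = 0)
    (k : ℕ) (hk : 1 ≤ k) (hkn : k ≤ Fintype.card V)
    (Sg : ℕ → Finset V) (h0 : Sg 0 = ∅)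
    (hstep : ∀ i < k, ∃ u ∉ Sg i, Sg (i + 1) = insert u (Sg i) ∧
      ∀ w, w ∉ Sg i → f (insert w (Sg i)) ≤ f (insert u (Sg i)))
    (Sstar : Finset V) (hcard : Sstar.card = k) :
    (1 - (1 - 1 / (k : ℝ)) ^ k) * f Sstar ≤ f (Sg k)
      ∧ (1 - 1 / Real.exp 1) * f Sstar ≤ (1 - (1 - 1 / (k : ℝ)) ^ k) * f Sstar := by
  constructor
  · have hgreedy : ∀ i < k, f Sstar ≤ f (Sg i) + k * (f (Sg (i + 1)) - f (Sg i)) := by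
      intro i hi
      obtain ⟨u, -, hnext, hmax⟩ := hstep i hi
      rw [hnext, ← hcard]
      refine (hmono _ _ Finset.subset_union_right).trans
        (submodular_union_le_add_card_mul hsub ?_ (fun w hw => ?_) Sstar)
      · exact sub_nonneg.2 (hmono _ _ (Finset.subset_insert u (Sg i)))
      · exact sub_le_sub_right (hmax w hw) _
    have hgap := sub_le_one_sub_inv_pow_mul (a := fun i => f (Sg i)) hk hgreedy le_rfl
    simp only [h0, hempty, sub_zero] at hgap
    linarith
  · refine mul_le_mul_of_nonneg_right ?_ (hnonneg Sstar)
    have hexp := Real.one_sub_div_pow_le_exp_neg (n := k) (t := 1) (by exact_mod_cast hk)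
    rw [Real.exp_neg, ← one_div] at hexp
    linarith
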